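/- Consider n ≥ 3 agents with single-integrator dynamics ṗ_i = u_i in the plane under the control u = −∇(V_F + V_M)(p), and suppose Assumption 1 holds: G contains a spanning triangulated Laman subgraph L_n such that (L_n,p*) is strongly nondegenerate. Then the set 𝓔_M = {p ∈ ℝ^{2n} : p = p̃ + 1_n ⊗ ξ for some ξ ∈ ℝ²} is locally exponentially stable for the flow ṗ = −∇(V_F + V_M)(p): there exist a neighborhood N of 𝓔_M and constants C, λ > 0 such that every solution starting in N satisfies dist(p(t), 𝓔_M) ≤ C·e^{−λt}·dist(p(0), 𝓔_M) for all t ≥ 0 and converges to 𝓔_M. -/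

import Mathlib

open Matrix Real

noncomputable section

/-- Points in the plane. -/
abbrev Vec2 := Fin 2 → ℝ

/-- The configuration space `ℝ^{2n}` of `n` agents in the plane. -/
abbrev Conf (n : ℕ) := EuclideanSpace ℝ (Fin n × Fin 2)

/-- The position of agent `i` in a configuration (junk value `0` for `i ≥ n`). -/
noncomputable def pt {n : ℕ} (P : Conf n) (i : ℕ) : Vec2 :=
  fun d => if h : i < n then P (⟨i, h⟩, d) else 0

/-- Euclidean norm of a planar vector. -/
noncomputable def nrm (x : Vec2) : ℝ := Real.sqrt (x ⬝ᵥ x)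

/-- The bearing `g(x,y) = (x - y)/‖x - y‖`. -/
noncomputable def brg (x y : Vec2) : Vec2 := (nrm (x - y))⁻¹ • (x - y)

/-- Cosine of the angle at vertex `t.1` between the edges towards `t.2.1` and `t.2.2`. -/
noncomputable def angCosP {n : ℕ} (P : Conf n) (t : ℕ × ℕ × ℕ) : ℝ :=
  brg (pt P t.1) (pt P t.2.1) ⬝ᵥ brg (pt P t.1) (pt P t.2.2)

/-- The formation cost function `V_F`. -/
noncomputable def VF {n : ℕ} (TF : Finset (ℕ × ℕ × ℕ)) (Pstar P : Conf n) : ℝ :=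
  (1 / 2) * ∑ t ∈ TF, (angCosP P t - angCosP Pstar t) ^ 2

/-- The maneuvering cost `V_M(p) = (1/2)‖(p̃_{l1} − p̃_{l2}) − (p_{l1} − p_{l2})‖²`. -/
noncomputable def VM {n : ℕ} (l1 l2 : ℕ) (Ptilde P : Conf n) : ℝ :=
  (1 / 2) * (((pt Ptilde l1 - pt Ptilde l2) - (pt P l1 - pt P l2)) ⬝ᵥ
    ((pt Ptilde l1 - pt Ptilde l2) - (pt P l1 - pt P l2)))

/-- The 2×2 rotation matrix. -/
noncomputable def Ro (θ : ℝ) : Matrix (Fin 2) (Fin 2) ℝ :=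
  !![Real.cos θ, -Real.sin θ; Real.sin θ, Real.cos θ]

/-- Triangulated Laman graphs on vertex set `{0, …, n-1}` (edges stored as symmetric
pairs). -/
inductive IsTLGraph : ℕ → Finset (ℕ × ℕ) → Prop
  | base : IsTLGraph 2 {(0, 1), (1, 0)}
  | step {n : ℕ} {E : Finset (ℕ × ℕ)} {i j : ℕ} :
      IsTLGraph n E → (i, j) ∈ E →
      IsTLGraph (n + 1) (E ∪ {(n, i), (i, n), (n, j), (j, n)})

/-- A target framework is strongly nondegenerate if the points of every triangle of the
graph are not collinear. -/
def StronglyNondegP {n : ℕ} (E : Finset (ℕ × ℕ)) (P : Conf n) : Prop :=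
  ∀ i j k : ℕ, (i, j) ∈ E → (j, k) ∈ E → (i, k) ∈ E →
    ¬ Collinear ℝ ({pt P i, pt P j, pt P k} : Set Vec2)

section Abstract

open Filter Topology Asymptotics

variable {F : Type*} [NormedAddCommGroup F] [InnerProductSpace ℝ F] [FiniteDimensional ℝ F]
variable {ι : Type*} [Fintype ι]

/-- Coercivity of a family of linear forms on the orthogonal complement of its kernel. -/
lemma coercive_of_ker (T : Submodule ℝ F) (D : ι → F →L[ℝ] ℝ)
    (hker : ∀ v, (∀ i, D i v = 0) → v ∈ T) :
    ∃ m > (0 : ℝ), ∀ q ∈ Tᗮ, m * ‖q‖ ^ 2 ≤ ∑ i, (D i q) ^ 2 := by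
  let L : F →ₗ[ℝ] EuclideanSpace ℝ ι :=
    (WithLp.linearEquiv 2 ℝ (ι → ℝ)).symm.toLinearMap ∘ₗ
      LinearMap.pi (fun i => (D i).toLinearMap)
  have hL : ∀ q i, L q i = D i q := fun q i => rfl
  have hinj : LinearMap.ker (L ∘ₗ Tᗮ.subtype) = ⊥ := by
    rw [LinearMap.ker_eq_bot']
    intro q hq
    have h1 : (q : F) ∈ T := by
      apply hker
      intro i
      have := congrArg (fun z : EuclideanSpace ℝ ι => z i) hq
      simpa [hL] using this
    have h2 : (q : F) = 0 := by
      have := Submodule.inner_right_of_mem_orthogonal h1 q.2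
      simpa using this
    exact_mod_cast h2
  obtain ⟨K, hK0, hK⟩ := LinearMap.exists_antilipschitzWith _ hinj
  have hK0' : (0 : ℝ) < K := hK0
  refine ⟨1 / (K : ℝ) ^ 2, by positivity, ?_⟩
  intro q hq
  have h1 : ‖q‖ ≤ K * ‖L q‖ := by
    have := ZeroHomClass.bound_of_antilipschitz _ hK (⟨q, hq⟩ : Tᗮ)
    simpa using this
  have h2 : ‖L q‖ ^ 2 = ∑ i, (D i q) ^ 2 := by
    rw [EuclideanSpace.real_norm_sq_eq]
    simp [hL]
  rw [← h2, div_mul_eq_mul_div, one_mul, div_le_iff₀ (by positivity)]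
  calc ‖q‖ ^ 2 ≤ (K * ‖L q‖) ^ 2 := by gcongr
    _ = _ := by ring

lemma local_coercive (T : Submodule ℝ F) (p : F) (f : ι → F → ℝ)
    (hf0 : ∀ i, f i p = 0) (hfd : ∀ i, ContDiffAt ℝ 1 (f i) p)
    (hker : ∀ v, (∀ i, fderiv ℝ (f i) p v = 0) → v ∈ T) :
    ∃ δ > (0 : ℝ), ∃ m > (0 : ℝ), ∀ q ∈ Tᗮ, ‖q‖ < δ →
      m * ‖q‖ ^ 2 ≤ inner ℝ (gradient (fun x => (1 / 2) * ∑ i, (f i x) ^ 2) (p + q)) q := by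
  obtain ⟨m, hm, hco⟩ := coercive_of_ker T (fun i => fderiv ℝ (f i) p) hker
  have htend : Tendsto (fun q : F => p + q) (𝓝 0) (𝓝 p) := by
    have : Continuous (fun q : F => p + q) := by fun_prop
    simpa using this.tendsto 0
  have h1 : ∀ i, (fun q : F => f i (p + q) - fderiv ℝ (f i) p q) =o[𝓝 0] fun q => q := by
    intro i
    have := ((hfd i).differentiableAt (by simp)).hasFDerivAt.isLittleO.comp_tendsto htend
    simpa [Function.comp_def, hf0] using this
  have h2 : ∀ i, (fun q : F => fderiv ℝ (f i) (p + q) q - fderiv ℝ (f i) p q)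
      =o[𝓝 0] fun q => q := by
    intro i
    have hc := ((hfd i).continuousAt_fderiv (by simp)).tendsto.comp htend
    rw [isLittleO_iff]
    intro c hc0
    have := (Metric.tendsto_nhds.1 hc) c hc0
    filter_upwards [this] with q hq
    rw [dist_eq_norm] at hq
    calc _ = ‖(fderiv ℝ (f i) (p + q) - fderiv ℝ (f i) p) q‖ := by simp
      _ ≤ ‖fderiv ℝ (f i) (p + q) - fderiv ℝ (f i) p‖ * ‖q‖ :=
        ContinuousLinearMap.le_opNorm _ _
      _ ≤ c * ‖q‖ := by gcongr; exact hq.le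
  have hO : ∀ i, (fun q : F => fderiv ℝ (f i) p q) =O[𝓝 0] fun q => ‖q‖ := fun i =>
    ((fderiv ℝ (f i) p).isBigO_id _).norm_right
  have h3 : (fun q : F => ∑ i, (f i (p + q) * fderiv ℝ (f i) (p + q) q
      - (fderiv ℝ (f i) p q) ^ 2)) =o[𝓝 0] fun q => ‖q‖ * ‖q‖ := by
    refine IsLittleO.fun_sum ?_
    intro i _
    have a1 := (h1 i).norm_right
    have a2 := (h2 i).norm_right
    have e : (fun q : F => f i (p + q) * fderiv ℝ (f i) (p + q) q - (fderiv ℝ (f i) p q) ^ 2)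
      = fun q => (f i (p + q) - fderiv ℝ (f i) p q) *
          (fderiv ℝ (f i) (p + q) q - fderiv ℝ (f i) p q) +
        ((f i (p + q) - fderiv ℝ (f i) p q) * fderiv ℝ (f i) p q +
          fderiv ℝ (f i) p q * (fderiv ℝ (f i) (p + q) q - fderiv ℝ (f i) p q)) := by
      funext q; ring
    rw [e]
    exact (a1.mul a2).add ((a1.mul_isBigO (hO i)).add ((hO i).mul_isLittleO a2))
  have h4 : ∀ᶠ q in 𝓝 (0 : F), ∀ i, DifferentiableAt ℝ (f i) (p + q) := by
    rw [eventually_all]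
    intro i
    have := ((hfd i).eventually (by simp))
    exact htend.eventually (this.mono fun x hx => hx.differentiableAt (by simp))
  have h5 := (isLittleO_iff.1 h3) (half_pos hm)
  obtain ⟨δ, hδ, hball⟩ := Metric.eventually_nhds_iff.1 (h4.and h5)
  refine ⟨δ, hδ, m / 2, half_pos hm, ?_⟩
  intro q hq hqδ
  obtain ⟨hd, hb⟩ := hball (y := q) (by simpa using hqδ)
  have hfd' : HasFDerivAt (fun x => (1 / 2) * ∑ i, (f i x) ^ 2)
      ((1 / 2 : ℝ) • ∑ i, ((2 : ℕ) * f i (p + q) ^ (2 - 1)) • fderiv ℝ (f i) (p + q)) (p + q) := by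
    apply HasFDerivAt.const_mul
    apply HasFDerivAt.fun_sum
    intro i _
    simpa using (hd i).hasFDerivAt.pow 2
  rw [inner_gradient_left, hfd'.fderiv]
  have h6 : (((1 / 2 : ℝ) • ∑ i, ((2 : ℕ) * f i (p + q) ^ (2 - 1)) •
      fderiv ℝ (f i) (p + q)) : F →L[ℝ] ℝ) q = ∑ i, f i (p + q) * fderiv ℝ (f i) (p + q) q := by
    simp only [_root_.smul_apply, _root_.sum_apply, smul_eq_mul,
      Finset.mul_sum]
    apply Finset.sum_congr rfl
    intro i _
    push_cast
    ring
  rw [h6]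
  rw [Finset.sum_sub_distrib, Real.norm_eq_abs, Real.norm_eq_abs, abs_mul_self] at hb
  have := (abs_le.1 hb).1
  have := hco q hq
  nlinarith

lemma infDist_translates (T : Submodule ℝ F) (p x : F) :
    Metric.infDist x {y | y - p ∈ T} = ‖Tᗮ.starProjection (x - p)‖ := by
  have hdec := Submodule.starProjection_add_starProjection_orthogonal (K := T) (x - p)
  apply le_antisymm
  · have hmem : p + T.starProjection (x - p) ∈ {y | y - p ∈ T} := by
      change p + T.starProjection (x - p) - p ∈ T
      rw [add_sub_cancel_left]
      exact Submodule.starProjection_apply_mem _ _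
    refine (Metric.infDist_le_dist_of_mem hmem).trans ?_
    rw [dist_eq_norm]
    apply le_of_eq
    congr 1
    rw [← sub_sub]
    nth_rewrite 1 [← hdec]
    abel
  · rw [Metric.le_infDist ⟨p, by simp⟩]
    intro y hy
    have h0 : Tᗮ.starProjection (y - p) = 0 := by
      rw [Submodule.starProjection_apply_eq_zero_iff, Submodule.orthogonal_orthogonal]
      exact hy
    have : Tᗮ.starProjection (x - p) = Tᗮ.starProjection (x - y) := by
      have e : x - p = (x - y) + (y - p) := by abel
      rw [e, map_add, h0, add_zero]
    rw [this, dist_eq_norm]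
    calc _ ≤ ‖Tᗮ.starProjection‖ * ‖x - y‖ := ContinuousLinearMap.le_opNorm _ _
      _ ≤ 1 * ‖x - y‖ := by gcongr; exact Submodule.starProjection_norm_le _
      _ = _ := one_mul _

theorem abstract_stability (T : Submodule ℝ F) (p : F) (f : ι → F → ℝ)
    (hf0 : ∀ i, f i p = 0) (hfd : ∀ i, ContDiffAt ℝ 1 (f i) p)
    (hker : ∀ v, (∀ i, fderiv ℝ (f i) p v = 0) → v ∈ T)
    (hinv : ∀ i x, ∀ τ ∈ T, f i (x + τ) = f i x) :
    ∃ N : Set F, IsOpen N ∧ {y | y - p ∈ T} ⊆ N ∧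
      ∃ C > (0 : ℝ), ∃ lam > (0 : ℝ),
        ∀ sol : ℝ → F, sol 0 ∈ N →
          (∀ t : ℝ, 0 ≤ t →
            HasDerivAt sol
              (-(gradient (fun x => (1 / 2) * ∑ i, (f i x) ^ 2) (sol t))) t) →
          (∀ t : ℝ, 0 ≤ t →
            Metric.infDist (sol t) {y | y - p ∈ T} ≤
              C * Real.exp (-lam * t) * Metric.infDist (sol 0) {y | y - p ∈ T}) ∧
          Tendsto (fun t => Metric.infDist (sol t) {y | y - p ∈ T}) atTop (𝓝 0) := by
  obtain ⟨δ, hδ, m, hm, hco⟩ := local_coercive T p f hf0 hfd hker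
  set V : F → ℝ := fun x => (1 / 2) * ∑ i, (f i x) ^ 2 with hV
  have hVinv : ∀ x, ∀ τ ∈ T, gradient V (x + τ) = gradient V x := by
    intro x τ hτ
    have : (fun x => V (x + τ)) = V := by
      funext y
      simp [hV, hinv _ _ τ hτ]
    unfold gradient
    rw [← fderiv_comp_add_right, this]
  refine ⟨{x | ‖Tᗮ.starProjection (x - p)‖ < δ}, ?_, ?_, 1, one_pos, m, hm, ?_⟩
  · exact isOpen_lt (by fun_prop) (by fun_prop)
  · intro y hy
    have h0 : Tᗮ.starProjection (y - p) = 0 := by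
      rw [Submodule.starProjection_apply_eq_zero_iff, Submodule.orthogonal_orthogonal]
      exact hy
    change ‖Tᗮ.starProjection (y - p)‖ < δ
    rw [h0, norm_zero]
    exact hδ
  intro sol h0 hsol
  change ‖Tᗮ.starProjection (sol 0 - p)‖ < δ at h0
  simp only [infDist_translates]
  set Q := Tᗮ.starProjection with hQ
  -- key inequality
  have key : ∀ x, ‖Q (x - p)‖ < δ → m * ‖Q (x - p)‖ ^ 2 ≤ inner ℝ (gradient V x) (Q (x - p)) := by
    intro x hx
    have hdec := Submodule.starProjection_add_starProjection_orthogonal (K := T) (x - p)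
    have e : x = (p + Q (x - p)) + T.starProjection (x - p) := by
      rw [add_assoc, add_comm (Q (x - p)), hdec]; abel
    have e2 : gradient V x = gradient V (p + Q (x - p)) := by
      conv_lhs => rw [e]
      exact hVinv _ _ (Submodule.starProjection_apply_mem _ _)
    rw [e2]
    exact hco _ (Submodule.starProjection_apply_mem _ _) hx
  set φ : ℝ → ℝ := fun t => ‖Q (sol t - p)‖ ^ 2 with hφ
  set φ' : ℝ → ℝ := fun t => 2 * inner ℝ (Q (sol t - p)) (Q (-(gradient V (sol t)))) with hφ'
  have hder : ∀ t, 0 ≤ t → HasDerivAt φ (φ' t) t := by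
    intro t ht
    exact (Q.hasFDerivAt.comp_hasDerivAt t ((hsol t ht).sub_const p)).norm_sq
  have hle : ∀ t, 0 ≤ t → φ t < δ ^ 2 → φ' t ≤ -(2 * m) * φ t := by
    intro t ht hlt
    have hlt' : ‖Q (sol t - p)‖ < δ := lt_of_pow_lt_pow_left₀ 2 hδ.le hlt
    have := key _ hlt'
    have e : inner ℝ (Q (sol t - p)) (Q (-(gradient V (sol t)))) =
        - inner ℝ (gradient V (sol t)) (Q (sol t - p)) := by
      rw [map_neg, inner_neg_right, real_inner_comm, Submodule.inner_starProjection_left_eq_right,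
        Submodule.starProjection_eq_self_iff.2 (Submodule.starProjection_apply_mem _ _)]
    simp only [hφ', e, hφ]
    linarith
  have hφ0 : φ 0 < δ ^ 2 := by
    simp only [hφ]; gcongr
  have hφnn : ∀ t, 0 ≤ φ t := fun t => by positivity
  have hstay : ∀ t, 0 ≤ t → φ t < δ ^ 2 := by
    intro t ht
    have hcpos : 0 < (φ 0 + δ ^ 2) / 2 := by have := hφnn 0; positivity
    have := image_le_of_deriv_right_lt_deriv_boundary (f := φ) (f' := φ') (a := 0) (b := t)
      (B := fun _ => (φ 0 + δ ^ 2) / 2) (B' := fun _ => 0)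
      (fun s hs => (hder s hs.1).continuousAt.continuousWithinAt)
      (fun s hs => (hder s hs.1).hasDerivWithinAt)
      (by linarith) (fun s => hasDerivAt_const _ _)
      (fun s hs hfs => by
        have := hle s hs.1 (by rw [hfs]; linarith)
        rw [hfs] at this
        nlinarith) (Set.right_mem_Icc.2 ht)
    linarith
  have hψ : ∀ t, 0 ≤ t → HasDerivAt (fun t => Real.exp (2 * m * t) * φ t)
      (Real.exp (2 * m * t) * (2 * m) * φ t + Real.exp (2 * m * t) * φ' t) t := by
    intro t ht
    have h1 : HasDerivAt (fun t : ℝ => Real.exp (2 * m * t)) (Real.exp (2 * m * t) * (2 * m)) t := by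
      simpa using ((hasDerivAt_id t).const_mul (2 * m)).exp
    exact h1.mul (hder t ht)
  have hanti : AntitoneOn (fun t => Real.exp (2 * m * t) * φ t) (Set.Ici 0) := by
    apply antitoneOn_of_deriv_nonpos (convex_Ici 0)
    · exact fun t ht => (hψ t ht).continuousAt.continuousWithinAt
    · intro t ht
      rw [interior_Ici] at ht
      exact (hψ t (le_of_lt ht)).differentiableAt.differentiableWithinAt
    · intro t ht
      rw [interior_Ici] at ht
      have ht' : (0 : ℝ) ≤ t := le_of_lt ht
      rw [(hψ t ht').deriv]
      have h1 := hle t ht' (hstay t ht')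
      have h2 := Real.exp_pos (2 * m * t)
      nlinarith
  have hbound : ∀ t : ℝ, 0 ≤ t →
      ‖Q (sol t - p)‖ ≤ 1 * Real.exp (-m * t) * ‖Q (sol 0 - p)‖ := by
    intro t ht
    have h1 := hanti (Set.mem_Ici.2 le_rfl) (Set.mem_Ici.2 ht) ht
    simp only [mul_zero, Real.exp_zero, one_mul] at h1
    have h2 : Real.exp (2 * m * t) = Real.exp (m * t) ^ 2 := by
      rw [← Real.exp_nat_mul]; congr 1; push_cast; ring
    rw [h2] at h1
    have h3 : Real.exp (m * t) * ‖Q (sol t - p)‖ ≤ ‖Q (sol 0 - p)‖ := by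
      apply le_of_sq_le_sq _ (norm_nonneg _)
      rw [mul_pow]; exact h1
    have h4 := Real.exp_pos (m * t)
    rw [one_mul, neg_mul, Real.exp_neg, inv_mul_eq_div, le_div_iff₀ h4]
    linarith
  refine ⟨hbound, ?_⟩
  have hlim : Tendsto (fun t : ℝ => 1 * Real.exp (-m * t) * ‖Q (sol 0 - p)‖) atTop (𝓝 0) := by
    have h1 : Tendsto (fun t : ℝ => Real.exp (-m * t)) atTop (𝓝 0) := by
      apply Real.tendsto_exp_atBot.comp
      exact tendsto_id.const_mul_atTop_of_neg (by linarith)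
    simpa using (h1.const_mul 1).mul_const ‖Q (sol 0 - p)‖
  exact tendsto_of_tendsto_of_tendsto_of_le_of_le' tendsto_const_nhds hlim
    (Eventually.of_forall fun t => norm_nonneg _)
    ((eventually_ge_atTop 0).mono hbound)

end Abstract

lemma tl_lt {m : ℕ} {EL : Finset (ℕ × ℕ)} (h : IsTLGraph m EL) :
    ∀ e ∈ EL, e.1 < m ∧ e.2 < m ∧ (e.2, e.1) ∈ EL := by
  induction h with
  | base => decide
  | @step n E i j hE hij ih =>
    have h1 := ih _ hij
    rintro ⟨a, b⟩ he
    simp only [Finset.mem_union, Finset.mem_insert, Finset.mem_singleton, Prod.mk.injEq] at he ⊢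
    rcases he with he | he
    · have := ih _ he
      simp only at this
      refine ⟨by omega, by omega, Or.inl this.2.2⟩
    · simp only at h1
      refine ⟨by omega, by omega, Or.inr (by tauto)⟩

/-- Rigidity: infinitesimal angle-preserving motions of a triangulated Laman graph are
infinitesimal similarities. -/
lemma tl_rigid (x y v w : ℕ → ℝ) {m : ℕ} {EL : Finset (ℕ × ℕ)} (h : IsTLGraph m EL) :
    (∀ e ∈ EL, (x e.2 - x e.1) ^ 2 + (y e.2 - y e.1) ^ 2 ≠ 0) →
    (∀ i j k : ℕ, (i, j) ∈ EL → (j, k) ∈ EL → (i, k) ∈ EL → i < k → j < k →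
      (x j - x i) * (y k - y i) - (y j - y i) * (x k - x i) ≠ 0 ∧
      ((x k - x i) * (w k - w i) - (y k - y i) * (v k - v i)) *
        ((x j - x i) ^ 2 + (y j - y i) ^ 2) =
      ((x j - x i) * (w j - w i) - (y j - y i) * (v j - v i)) *
        ((x k - x i) ^ 2 + (y k - y i) ^ 2)) →
    ∃ α β ξ η : ℝ, ∀ i < m, v i = α * x i - β * y i + ξ ∧ w i = β * x i + α * y i + η := by
  induction h with
  | base =>
    intro hne _
    have h01 := hne (0, 1) (by simp)
    simp only at h01
    set d := (x 1 - x 0) ^ 2 + (y 1 - y 0) ^ 2 with hd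
    set α := ((v 1 - v 0) * (x 1 - x 0) + (w 1 - w 0) * (y 1 - y 0)) / d with hα
    set β := ((w 1 - w 0) * (x 1 - x 0) - (v 1 - v 0) * (y 1 - y 0)) / d with hβ
    have e1 : v 1 - v 0 = α * (x 1 - x 0) - β * (y 1 - y 0) := by
      rw [hα, hβ]; field_simp; rw [hd]; ring
    have e2 : w 1 - w 0 = β * (x 1 - x 0) + α * (y 1 - y 0) := by
      rw [hα, hβ]; field_simp; rw [hd]; ring
    refine ⟨α, β, v 0 - (α * x 0 - β * y 0), w 0 - (β * x 0 + α * y 0), ?_⟩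
    intro i hi
    have : i = 0 ∨ i = 1 := by omega
    rcases this with rfl | rfl
    · constructor <;> ring
    · constructor <;> linarith
  | @step n E i j hE hij ih =>
    intro hne htri
    obtain ⟨α, β, ξ, η, hind⟩ := ih
      (fun e he => hne e (Finset.mem_union_left _ he))
      (fun a b c h1 h2 h3 => htri a b c (Finset.mem_union_left _ h1)
        (Finset.mem_union_left _ h2) (Finset.mem_union_left _ h3))
    obtain ⟨hi, hj, hji⟩ := tl_lt hE _ hij
    simp only at hi hj hji
    refine ⟨α, β, ξ, η, ?_⟩
    have t1 := htri i j n (by simp [hij]) (by simp) (by simp) hi hj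
    have t2 := htri j i n (by simp [hji]) (by simp) (by simp) hj hi
    have hn0 := hne (i, j) (by simp [hij])
    simp only at hn0
    obtain ⟨vi, wi⟩ := hind i hi
    obtain ⟨vj, wj⟩ := hind j hj
    obtain ⟨hc, q1⟩ := t1
    obtain ⟨_, q2⟩ := t2
    intro a ha
    rcases Nat.lt_succ_iff_lt_or_eq.1 ha with ha | rfl
    · exact hind a ha
    -- the defect
    set r := v a - (α * x a - β * y a + ξ) with hr
    set s := w a - (β * x a + α * y a + η) with hs
    have ev : v a = r + (α * x a - β * y a + ξ) := by rw [hr]; ring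
    have ew : w a = s + (β * x a + α * y a + η) := by rw [hs]; ring
    rw [ev, ew, vi, wi, vj, wj] at q1 q2
    have k1 : (x a - x i) * s - (y a - y i) * r = 0 := by
      have : ((x a - x i) * s - (y a - y i) * r) * ((x j - x i) ^ 2 + (y j - y i) ^ 2) = 0 := by
        linear_combination q1
      exact (mul_eq_zero.1 this).resolve_right hn0
    have k2 : (x a - x j) * s - (y a - y j) * r = 0 := by
      have : ((x a - x j) * s - (y a - y j) * r) * ((x j - x i) ^ 2 + (y j - y i) ^ 2) = 0 := by
        linear_combination q2
      exact (mul_eq_zero.1 this).resolve_right hn0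
    have r0 : r = 0 := by
      have : ((x j - x i) * (y a - y i) - (y j - y i) * (x a - x i)) * r = 0 := by
        linear_combination (x a - x j) * k1 - (x a - x i) * k2
      exact (mul_eq_zero.1 this).resolve_left hc
    have s0 : s = 0 := by
      have : ((x j - x i) * (y a - y i) - (y j - y i) * (x a - x i)) * s = 0 := by
        linear_combination (y a - y j) * k1 - (y a - y i) * k2
      exact (mul_eq_zero.1 this).resolve_left hc
    rw [r0] at ev
    rw [s0] at ew
    constructor <;> linarith

/-- Cosine of the angle between two planar vectors in coordinates. -/
def cosf (a b c d : ℝ) : ℝ := (a * c + b * d) / (√(a ^ 2 + b ^ 2) * √(c ^ 2 + d ^ 2))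

lemma cosf_deriv (a b c d a' b' c' d' : ℝ) (h1 : a ^ 2 + b ^ 2 ≠ 0) (h2 : c ^ 2 + d ^ 2 ≠ 0) :
    HasDerivAt (fun s : ℝ => cosf (a + s * a') (b + s * b') (c + s * c') (d + s * d'))
      (-(a * d - b * c) / (√(a ^ 2 + b ^ 2) * √(c ^ 2 + d ^ 2)) *
        ((c * d' - d * c') / (c ^ 2 + d ^ 2) - (a * b' - b * a') / (a ^ 2 + b ^ 2))) 0 := by
  have hl : ∀ a a' : ℝ, HasDerivAt (fun s : ℝ => a + s * a') a' 0 := fun a a' => by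
    simpa using ((hasDerivAt_id (0 : ℝ)).mul_const a').const_add a
  have hn : ∀ a a' b b' : ℝ, a ^ 2 + b ^ 2 ≠ 0 → HasDerivAt
      (fun s : ℝ => √((a + s * a') ^ 2 + (b + s * b') ^ 2))
      ((a * a' + b * b') / √(a ^ 2 + b ^ 2)) 0 := fun a a' b b' h => by
    have := (((hl a a').pow 2).add ((hl b b').pow 2)).sqrt (by simpa using h)
    refine this.congr_deriv ?_
    simp
    field_simp
  have hp : ∀ a b : ℝ, a ^ 2 + b ^ 2 ≠ 0 → 0 < a ^ 2 + b ^ 2 := fun a b h =>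
    lt_of_le_of_ne (by positivity) (Ne.symm h)
  have s1 := Real.sqrt_pos.2 (hp a b h1)
  have s2 := Real.sqrt_pos.2 (hp c d h2)
  have q1 := Real.sq_sqrt (hp a b h1).le
  have q2 := Real.sq_sqrt (hp c d h2).le
  have := (((hl a a').mul (hl c c')).add ((hl b b').mul (hl d d'))).div
    ((hn a a' b b' h1).mul (hn c c' d d' h2)) (by simp; exact ⟨s1.ne', s2.ne'⟩)
  refine this.congr_deriv ?_
  simp only [Pi.mul_apply, Pi.add_apply, zero_mul, add_zero]
  set p := √(a ^ 2 + b ^ 2)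
  set q := √(c ^ 2 + d ^ 2)
  rw [← q1, ← q2]
  field_simp
  rw [show p ^ 2 = a ^ 2 + b ^ 2 from q1, show q ^ 2 = c ^ 2 + d ^ 2 from q2]
  ring

lemma angCosP_eq {n : ℕ} (P : Conf n) (i j k : ℕ) :
    angCosP P (i, j, k) = cosf (pt P i 0 - pt P j 0) (pt P i 1 - pt P j 1)
      (pt P i 0 - pt P k 0) (pt P i 1 - pt P k 1) := by
  simp only [angCosP, brg, nrm, cosf, dotProduct, Fin.sum_univ_two, Pi.smul_apply, Pi.sub_apply,
    smul_eq_mul, ← pow_two]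
  rw [div_eq_mul_inv, mul_inv]
  ring

lemma pt_line {n : ℕ} (P v : Conf n) (s : ℝ) (i : ℕ) (d : Fin 2) :
    pt (P + s • v) i d = pt P i d + s * pt v i d := by
  unfold pt
  split_ifs <;> simp

lemma pt_contDiff {n : ℕ} (i : ℕ) (d : Fin 2) :
    ContDiff ℝ 1 (fun P : Conf n => pt P i d) := by
  unfold pt
  split_ifs
  · fun_prop
  · fun_prop

lemma cross_ne {a b c : Vec2} (hab : (b 0 - a 0) ^ 2 + (b 1 - a 1) ^ 2 ≠ 0)
    (h : ¬ Collinear ℝ ({a, b, c} : Set Vec2)) :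
    (b 0 - a 0) * (c 1 - a 1) - (b 1 - a 1) * (c 0 - a 0) ≠ 0 := by
  intro h0
  apply h
  rw [collinear_iff_of_mem (p₀ := a) (by simp)]
  refine ⟨b - a, ?_⟩
  intro p hp
  simp only [Set.mem_insert_iff, Set.mem_singleton_iff] at hp
  rcases hp with rfl | rfl | rfl
  · exact ⟨0, by simp⟩
  · exact ⟨1, by simp⟩
  · refine ⟨((b 0 - a 0) * (p 0 - a 0) + (b 1 - a 1) * (p 1 - a 1)) /
      ((b 0 - a 0) ^ 2 + (b 1 - a 1) ^ 2), ?_⟩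
    funext d
    fin_cases d
    · simp only [vadd_eq_add, Pi.add_apply, Pi.smul_apply, Pi.sub_apply, smul_eq_mul,
        Fin.zero_eta, Fin.mk_one]
      field_simp
      linear_combination (a 1 - b 1) * h0
    · simp only [vadd_eq_add, Pi.add_apply, Pi.smul_apply, Pi.sub_apply, smul_eq_mul,
        Fin.zero_eta, Fin.mk_one]
      field_simp
      linear_combination (b 0 - a 0) * h0

/-- The subspace of simultaneous translations. -/
def transl (n : ℕ) : Submodule ℝ (Conf n) where
  carrier := {τ | ∃ ξ : Vec2, ∀ (i : Fin n) (d : Fin 2), τ (i, d) = ξ d}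
  add_mem' := by
    rintro a b ⟨ξ, hξ⟩ ⟨η, hη⟩
    exact ⟨ξ + η, fun i d => by simp [hξ, hη]⟩
  zero_mem' := ⟨0, fun i d => by simp⟩
  smul_mem' := by
    rintro c a ⟨ξ, hξ⟩
    exact ⟨c • ξ, fun i d => by simp [hξ]⟩

lemma mem_transl {n : ℕ} (τ : Conf n) :
    τ ∈ transl n ↔ ∃ ξ : Vec2, ∀ (i : Fin n) (d : Fin 2), τ (i, d) = ξ d := Iff.rfl

lemma pt_transl {n : ℕ} (P τ : Conf n) (hτ : τ ∈ transl n) (i j : ℕ) (hi : i < n) (hj : j < n)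
    (d : Fin 2) : pt (P + τ) i d - pt (P + τ) j d = pt P i d - pt P j d := by
  obtain ⟨ξ, hξ⟩ := (mem_transl τ).1 hτ
  simp [pt, hi, hj, hξ]

lemma sq_ne {a b : Vec2} (h : a ≠ b) : (b 0 - a 0) ^ 2 + (b 1 - a 1) ^ 2 ≠ 0 := by
  intro h0
  apply h
  have h1 : b 0 - a 0 = 0 := by nlinarith [sq_nonneg (b 0 - a 0), sq_nonneg (b 1 - a 1)]
  have h2 : b 1 - a 1 = 0 := by nlinarith [sq_nonneg (b 0 - a 0), sq_nonneg (b 1 - a 1)]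
  funext d
  fin_cases d
  · simp only [Fin.zero_eta]; linarith
  · simp only [Fin.mk_one]; linarith

lemma cosf_sim (c θ a b e f : ℝ) (hc : c ≠ 0) :
    cosf (c * (Real.cos θ * a - Real.sin θ * b)) (c * (Real.sin θ * a + Real.cos θ * b))
      (c * (Real.cos θ * e - Real.sin θ * f)) (c * (Real.sin θ * e + Real.cos θ * f)) =
    cosf a b e f := by
  have hcs := Real.sin_sq_add_cos_sq θ
  have hn : ∀ a b : ℝ, √((c * (Real.cos θ * a - Real.sin θ * b)) ^ 2 +
      (c * (Real.sin θ * a + Real.cos θ * b)) ^ 2) = |c| * √(a ^ 2 + b ^ 2) := fun a b => by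
    rw [← Real.sqrt_sq_eq_abs, ← Real.sqrt_mul (sq_nonneg c)]
    congr 1
    linear_combination c ^ 2 * (a ^ 2 + b ^ 2) * hcs
  unfold cosf
  rw [hn, hn]
  have e1 : c * (Real.cos θ * a - Real.sin θ * b) * (c * (Real.cos θ * e - Real.sin θ * f)) +
      c * (Real.sin θ * a + Real.cos θ * b) * (c * (Real.sin θ * e + Real.cos θ * f)) =
      c ^ 2 * (a * e + b * f) := by
    linear_combination c ^ 2 * (a * e + b * f) * hcs
  have e2 : |c| * √(a ^ 2 + b ^ 2) * (|c| * √(e ^ 2 + f ^ 2)) =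
      c ^ 2 * (√(a ^ 2 + b ^ 2) * √(e ^ 2 + f ^ 2)) := by
    rw [← sq_abs c]; ring
  rw [e1, e2, mul_div_mul_left _ _ (pow_ne_zero 2 hc)]

/-- under Assumption 1, the set `𝓔_M` of translates of
`p̃ = c*(I_n ⊗ R_o(θ*))p*` is locally exponentially stable for the gradient flow
`ṗ = −∇(V_F + V_M)(p)`: there is a neighborhood `N` of `𝓔_M` and constants
`C, λ > 0` such that every solution starting in `N` satisfies
`dist(p(t), 𝓔_M) ≤ C e^{−λt} dist(p(0), 𝓔_M)` for all `t ≥ 0` and converges to `𝓔_M`. -/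
theorem maneuver_gradient_flow_locally_exponentially_stable
    {n : ℕ} (hn : 3 ≤ n) (E : Finset (ℕ × ℕ))
    (hVtx : ∀ e ∈ E, e.1 < n ∧ e.2 < n)
    (hsym : ∀ e ∈ E, (e.2, e.1) ∈ E)
    (hirr : ∀ e ∈ E, e.1 ≠ e.2)
    (TF : Finset (ℕ × ℕ × ℕ))
    (hTF : ∀ t : ℕ × ℕ × ℕ, t ∈ TF ↔
      ((t.1, t.2.1) ∈ E ∧ (t.2.1, t.2.2) ∈ E ∧ (t.1, t.2.2) ∈ E ∧
        t.1 < t.2.2 ∧ t.2.1 < t.2.2))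
    (Pstar : Conf n)
    (hPs : ∀ e ∈ E, pt Pstar e.1 ≠ pt Pstar e.2)
    -- Assumption 1: a spanning triangulated Laman subgraph, strongly nondegenerate at p*
    (EL : Finset (ℕ × ℕ)) (hTL : IsTLGraph n EL) (hsub : ∀ e ∈ EL, e ∈ E)
    (hsnd : StronglyNondegP EL Pstar)
    (θstar : ℝ) (hθ : θstar ∈ Set.Ico 0 (2 * π))
    (cstar : ℝ) (hc : cstar ≠ 0)
    (Ptilde : Conf n)
    (hPt : ∀ (i : Fin n) (d : Fin 2),
      Ptilde (i, d) = cstar * (Ro θstar).mulVec (fun d' => Pstar (i, d')) d)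
    (l1 l2 : ℕ) (hl : (l1, l2) ∈ E)
    (EM : Set (Conf n))
    (hEM : EM = {P : Conf n | ∃ ξ : Vec2, ∀ (i : Fin n) (d : Fin 2),
      P (i, d) = Ptilde (i, d) + ξ d}) :
    ∃ N : Set (Conf n), IsOpen N ∧ EM ⊆ N ∧
      ∃ C > (0 : ℝ), ∃ lam > (0 : ℝ),
        ∀ sol : ℝ → Conf n, sol 0 ∈ N →
          (∀ t : ℝ, 0 ≤ t →
            HasDerivAt sol
              (-(gradient (fun P => VF TF Pstar P + VM l1 l2 Ptilde P) (sol t))) t) →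
          (∀ t : ℝ, 0 ≤ t →
            Metric.infDist (sol t) EM ≤
              C * Real.exp (-lam * t) * Metric.infDist (sol 0) EM) ∧
          Filter.Tendsto (fun t => Metric.infDist (sol t) EM) Filter.atTop (nhds 0) := by
  have hPx : ∀ i < n, pt Ptilde i 0 =
      cstar * (Real.cos θstar * pt Pstar i 0 - Real.sin θstar * pt Pstar i 1) := by
    intro i hi
    simp [pt, hi, hPt, Ro, Matrix.mulVec, dotProduct, Fin.sum_univ_two]
    left; ring
  have hPy : ∀ i < n, pt Ptilde i 1 =
      cstar * (Real.sin θstar * pt Pstar i 0 + Real.cos θstar * pt Pstar i 1) := by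
    intro i hi
    simp [pt, hi, hPt, Ro, Matrix.mulVec, dotProduct, Fin.sum_univ_two]
  have hcs := Real.sin_sq_add_cos_sq θstar
  have hPtne : ∀ e ∈ E, (pt Ptilde e.2 0 - pt Ptilde e.1 0) ^ 2 +
      (pt Ptilde e.2 1 - pt Ptilde e.1 1) ^ 2 ≠ 0 := by
    intro e he
    obtain ⟨h1, h2⟩ := hVtx e he
    have h3 := sq_ne (hPs e he)
    rw [hPx _ h1, hPx _ h2, hPy _ h1, hPy _ h2]
    intro h0
    apply mul_ne_zero (pow_ne_zero 2 hc) h3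
    rw [← h0]
    linear_combination -cstar ^ 2 * ((pt Pstar e.2 0 - pt Pstar e.1 0) ^ 2 +
      (pt Pstar e.2 1 - pt Pstar e.1 1) ^ 2) * hcs
  have hPtne' : ∀ i j, (i, j) ∈ E → (pt Ptilde i 0 - pt Ptilde j 0) ^ 2 +
      (pt Ptilde i 1 - pt Ptilde j 1) ^ 2 ≠ 0 := by
    intro i j hij
    exact hPtne (j, i) (hsym _ hij)
  -- residuals
  let f : ({t // t ∈ TF} ⊕ Fin 2) → Conf n → ℝ := Sum.elim
    (fun t P => angCosP P t.1 - angCosP Pstar t.1)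
    (fun d P => (pt Ptilde l1 d - pt Ptilde l2 d) - (pt P l1 d - pt P l2 d))
  have hVf : (fun P => VF TF Pstar P + VM l1 l2 Ptilde P) =
      fun P => (1 / 2) * ∑ i, (f i P) ^ 2 := by
    funext P
    have h1 : ∑ t ∈ TF, (angCosP P t - angCosP Pstar t) ^ 2 =
        ∑ t : {t // t ∈ TF}, (angCosP P t.1 - angCosP Pstar t.1) ^ 2 :=
      (Finset.sum_coe_sort TF (fun t => (angCosP P t - angCosP Pstar t) ^ 2)).symm
    rw [VF, VM, h1, Fintype.sum_sum_type]
    simp only [f, Sum.elim_inl, Sum.elim_inr, dotProduct, Fin.sum_univ_two, Pi.sub_apply]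
    ring
  have hEM' : EM = {y | y - Ptilde ∈ transl n} := by
    rw [hEM]
    ext P
    change (∃ ξ : Vec2, _) ↔ (∃ ξ : Vec2, _)
    apply exists_congr
    intro ξ
    apply forall_congr'
    intro i
    apply forall_congr'
    intro d
    rw [PiLp.sub_apply, sub_eq_iff_eq_add, add_comm]
  have hcd : ∀ t ∈ TF, ContDiffAt ℝ 1 (fun P : Conf n => angCosP P t) Ptilde := by
    rintro ⟨i, j, k⟩ ht
    obtain ⟨h1, h2, h3, h4, h5⟩ := (hTF _).1 ht
    simp only at h1 h2 h3
    have a1 := hPtne' _ _ h1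
    have a2 := hPtne' _ _ h3
    simp only [angCosP_eq, cosf]
    have hp : ∀ i d, ContDiffAt ℝ 1 (fun P : Conf n => pt P i d) Ptilde := fun i d =>
      (pt_contDiff i d).contDiffAt
    have hs : ∀ i j, (i, j) ∈ E → ContDiffAt ℝ 1 (fun P : Conf n =>
        √((pt P i 0 - pt P j 0) ^ 2 + (pt P i 1 - pt P j 1) ^ 2)) Ptilde := fun i j hij =>
      (((hp i 0).sub (hp j 0)).pow 2 |>.add (((hp i 1).sub (hp j 1)).pow 2)).sqrt
        (hPtne' _ _ hij)
    have hsne : ∀ i j, (i, j) ∈ E →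
        √((pt Ptilde i 0 - pt Ptilde j 0) ^ 2 + (pt Ptilde i 1 - pt Ptilde j 1) ^ 2) ≠ 0 :=
      fun i j hij => (Real.sqrt_pos.2 (lt_of_le_of_ne (by positivity)
        (Ne.symm (hPtne' _ _ hij)))).ne'
    exact ((((hp i 0).sub (hp j 0)).mul ((hp i 0).sub (hp k 0))).add
      (((hp i 1).sub (hp j 1)).mul ((hp i 1).sub (hp k 1)))).div
      ((hs _ _ h1).mul (hs _ _ h3)) (mul_ne_zero (hsne _ _ h1) (hsne _ _ h3))
  have hfd : ∀ i, ContDiffAt ℝ 1 (f i) Ptilde := by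
    rintro (t | d)
    · exact (hcd t.1 t.2).sub contDiffAt_const
    · exact contDiffAt_const.sub ((pt_contDiff l1 d).contDiffAt.sub (pt_contDiff l2 d).contDiffAt)
  rw [hVf, hEM']
  refine abstract_stability (transl n) Ptilde f ?_ hfd ?_ ?_
  · rintro (⟨⟨i, j, k⟩, ht⟩ | d)
    · obtain ⟨h1, h2, h3, h4, h5⟩ := (hTF _).1 ht
      obtain ⟨hi, hj⟩ := hVtx _ h1
      obtain ⟨-, hk⟩ := hVtx _ h2
      simp only at hi hj hk
      simp only [f, Sum.elim_inl, sub_eq_zero, angCosP_eq]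
      rw [← cosf_sim cstar θstar (pt Pstar i 0 - pt Pstar j 0) (pt Pstar i 1 - pt Pstar j 1)
        (pt Pstar i 0 - pt Pstar k 0) (pt Pstar i 1 - pt Pstar k 1) hc, hPx _ hi, hPx _ hj, hPx _ hk,
        hPy _ hi, hPy _ hj, hPy _ hk]
      congr 1 <;> ring
    · simp [f]
  · intro u hu
    have hlin : ∀ i, HasDerivAt (fun s : ℝ => f i (Ptilde + s • u)) 0 0 := by
      intro i
      have := ((hfd i).differentiableAt (by simp)).hasFDerivAt.hasLineDerivAt u
      rw [hu i] at this
      exact this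
    have hang : ∀ i j k, (i, j) ∈ E → (j, k) ∈ E → (i, k) ∈ E → i < k → j < k →
        -((pt Ptilde i 0 - pt Ptilde j 0) * (pt Ptilde i 1 - pt Ptilde k 1) -
          (pt Ptilde i 1 - pt Ptilde j 1) * (pt Ptilde i 0 - pt Ptilde k 0)) /
        (√((pt Ptilde i 0 - pt Ptilde j 0) ^ 2 + (pt Ptilde i 1 - pt Ptilde j 1) ^ 2) *
          √((pt Ptilde i 0 - pt Ptilde k 0) ^ 2 + (pt Ptilde i 1 - pt Ptilde k 1) ^ 2)) *
        (((pt Ptilde i 0 - pt Ptilde k 0) * (pt u i 1 - pt u k 1) -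
          (pt Ptilde i 1 - pt Ptilde k 1) * (pt u i 0 - pt u k 0)) /
          ((pt Ptilde i 0 - pt Ptilde k 0) ^ 2 + (pt Ptilde i 1 - pt Ptilde k 1) ^ 2) -
         ((pt Ptilde i 0 - pt Ptilde j 0) * (pt u i 1 - pt u j 1) -
          (pt Ptilde i 1 - pt Ptilde j 1) * (pt u i 0 - pt u j 0)) /
          ((pt Ptilde i 0 - pt Ptilde j 0) ^ 2 + (pt Ptilde i 1 - pt Ptilde j 1) ^ 2)) = 0 := by
      intro i j k h1 h2 h3 h4 h5
      have ht : (i, j, k) ∈ TF := (hTF _).2 ⟨h1, h2, h3, h4, h5⟩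
      have d1 := hlin (Sum.inl ⟨(i, j, k), ht⟩)
      have d2 := (cosf_deriv _ _ _ _ (pt u i 0 - pt u j 0) (pt u i 1 - pt u j 1)
        (pt u i 0 - pt u k 0) (pt u i 1 - pt u k 1) (hPtne' _ _ h1)
        (hPtne' _ _ h3)).sub_const (angCosP Pstar (i, j, k))
      refine d2.unique (d1.congr_of_eventuallyEq (Filter.Eventually.of_forall fun s => ?_))
      simp only [f, Sum.elim_inl, angCosP_eq, pt_line]
      congr 2 <;> ring
    obtain ⟨α, β, ξ, η, hsim⟩ := tl_rigid (fun i => pt Ptilde i 0) (fun i => pt Ptilde i 1)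
      (fun i => pt u i 0) (fun i => pt u i 1) hTL
      (fun e he => hPtne e (hsub e he))
      (by
        intro i j k h1 h2 h3 h4 h5
        have E1 := hsub _ h1
        have E2 := hsub _ h2
        have E3 := hsub _ h3
        have hcr := cross_ne (sq_ne (hPs _ E1)) (hsnd i j k h1 h2 h3)
        obtain ⟨hi, hj⟩ := hVtx _ E1
        obtain ⟨-, hk⟩ := hVtx _ E2
        simp only at hi hj hk hcr
        have hcr' : (pt Ptilde j 0 - pt Ptilde i 0) * (pt Ptilde k 1 - pt Ptilde i 1) -
            (pt Ptilde j 1 - pt Ptilde i 1) * (pt Ptilde k 0 - pt Ptilde i 0) ≠ 0 := by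
          have : (pt Ptilde j 0 - pt Ptilde i 0) * (pt Ptilde k 1 - pt Ptilde i 1) -
            (pt Ptilde j 1 - pt Ptilde i 1) * (pt Ptilde k 0 - pt Ptilde i 0) =
            cstar ^ 2 * ((pt Pstar j 0 - pt Pstar i 0) * (pt Pstar k 1 - pt Pstar i 1) -
            (pt Pstar j 1 - pt Pstar i 1) * (pt Pstar k 0 - pt Pstar i 0)) := by
            rw [hPx _ hi, hPx _ hj, hPx _ hk, hPy _ hi, hPy _ hj, hPy _ hk]
            linear_combination cstar ^ 2 * ((pt Pstar j 0 - pt Pstar i 0) *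
              (pt Pstar k 1 - pt Pstar i 1) -
              (pt Pstar j 1 - pt Pstar i 1) * (pt Pstar k 0 - pt Pstar i 0)) * hcs
          rw [this]
          exact mul_ne_zero (pow_ne_zero 2 hc) hcr
        refine ⟨hcr', ?_⟩
        have n1 := hPtne' _ _ E1
        have n3 := hPtne' _ _ E3
        have r1 := (Real.sqrt_pos.2 (lt_of_le_of_ne (by positivity) (Ne.symm n1))).ne'
        have r3 := (Real.sqrt_pos.2 (lt_of_le_of_ne (by positivity) (Ne.symm n3))).ne'
        have hz := (mul_eq_zero.1 (hang i j k E1 E2 E3 h4 h5)).resolve_left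
          (div_ne_zero (neg_ne_zero.2 (fun h => hcr' (by rw [← h]; ring)))
            (mul_ne_zero r1 r3))
        rw [sub_eq_zero, div_eq_div_iff n3 n1] at hz
        linear_combination hz)
    obtain ⟨hl1, hl2⟩ := hVtx _ hl
    simp only at hl1 hl2
    have hlead : ∀ d, pt u l1 d - pt u l2 d = 0 := by
      intro d
      have d1 := hlin (Sum.inr d)
      have d2 : HasDerivAt (fun s : ℝ => (pt Ptilde l1 d - pt Ptilde l2 d) -
          ((pt Ptilde l1 d - pt Ptilde l2 d) + s * (pt u l1 d - pt u l2 d)))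
          (-(pt u l1 d - pt u l2 d)) 0 := by
        simpa using (((hasDerivAt_id (0 : ℝ)).mul_const (pt u l1 d - pt u l2 d)).const_add
          (pt Ptilde l1 d - pt Ptilde l2 d)).const_sub (pt Ptilde l1 d - pt Ptilde l2 d)
      have := d2.unique (d1.congr_of_eventuallyEq (Filter.Eventually.of_forall fun s => by
        simp only [f, Sum.elim_inr, pt_line]; ring))
      linarith
    have g0 := hlead 0
    have g1 := hlead 1
    have hne := hPtne' _ _ hl
    rw [(hsim l1 hl1).1, (hsim l2 hl2).1] at g0
    rw [(hsim l1 hl1).2, (hsim l2 hl2).2] at g1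
    have hα : α = 0 := by
      refine (mul_eq_zero.1 (?_ : α * ((pt Ptilde l1 0 - pt Ptilde l2 0) ^ 2 +
        (pt Ptilde l1 1 - pt Ptilde l2 1) ^ 2) = 0)).resolve_right hne
      linear_combination (pt Ptilde l1 0 - pt Ptilde l2 0) * g0 +
        (pt Ptilde l1 1 - pt Ptilde l2 1) * g1
    have hβ : β = 0 := by
      refine (mul_eq_zero.1 (?_ : β * ((pt Ptilde l1 0 - pt Ptilde l2 0) ^ 2 +
        (pt Ptilde l1 1 - pt Ptilde l2 1) ^ 2) = 0)).resolve_right hne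
      linear_combination (pt Ptilde l1 0 - pt Ptilde l2 0) * g1 -
        (pt Ptilde l1 1 - pt Ptilde l2 1) * g0
    rw [mem_transl]
    refine ⟨![ξ, η], ?_⟩
    intro i d
    have hi := hsim i.1 i.2
    rw [hα, hβ] at hi
    have hpt : ∀ d, pt u i.1 d = u (i, d) := fun d => by simp [pt]
    rw [hpt, hpt] at hi
    fin_cases d
    · simpa using hi.1
    · simpa using hi.2
  · rintro (⟨⟨i, j, k⟩, ht⟩ | d) x τ hτ
    · obtain ⟨h1, h2, h3, h4, h5⟩ := (hTF _).1 ht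
      obtain ⟨hi, hj⟩ := hVtx _ h1
      obtain ⟨-, hk⟩ := hVtx _ h2
      simp only at hi hj hk
      simp only [f, Sum.elim_inl, angCosP_eq, pt_transl x τ hτ i j hi hj,
        pt_transl x τ hτ i k hi hk]
    · obtain ⟨hl1, hl2⟩ := hVtx _ hl
      simp only [f, Sum.elim_inr, pt_transl x τ hτ l1 l2 hl1 hl2]
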